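/- Let A be a C*-algebra, H a complex Hilbert space, ρ a completely n-positive linear map from A to L(H), and (Φ_ρ, H_ρ, V_{ρ,1}, …, V_{ρ,n}) a Stinespring representation of ρ. Then ρ is pure (i.e., every completely n-positive θ with θ ≤ ρ satisfies θ = αρ for some α ∈ [0,1]) if and only if the representation Φ_ρ is irreducible, i.e., the commutant Φ_ρ(A)′ in L(H_ρ) consists exactly of the scalar multiples of the identity operator on H_ρ. -/

import Mathlib

/-!
The proof rests on the Radon-Nikodym correspondence between completely `n`-positive maps `θ ≤ ρ` and
operators `0 ≤ T ≤ 1` in the commutant of `Φ`, given by `θ_ij (a) = (V i)* T (Φ a) (V j)`.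

From operators to maps (`isCnP_of_commute`): for `x = y* y` the entries of the image of `x` are
sums of terms `(Φ(y_s) V_i)* T (Φ(y_t) V_j)`, as `T` commutes with `Φ`. So the image is the matrix
of a positive operator on a Hilbert sum of copies of `H`, and a square root of this operator writes
it as `z* z` (`exists_sqrt_matrix`). Apply this to both `T` and `1 - T`: if `ρ` is pure, then
the map of `T` is `α • ρ`, and density of the vectors `Φ a (V i ξ)` gives `T = α`. An arbitrary
element of the commutant is a combination of its real and imaginary parts, which become
operators between `0` and `1` after a shift and a rescaling (`scalar_of_pure`).

From maps to operators (`IsStinespringRep.exists_radonNikodym`): the form `⟪ξ, θ_ij (a* b) η⟫` on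
formal combinations of triples `(i, a, ξ)` is positive semidefinite and dominated by the same form
for `ρ`, which is the inner product of the vectors `Φ a (V i ξ)`. So the form is given by a positive
contraction `T` on `K` (`exists_dominated_operator`), and `T` commutes with `Φ`. If `Φ` is
irreducible, `T` is a scalar in `[0, 1]`, and `θ = α • ρ` follows on products `a* b`, which
span `A`.
-/

noncomputable section

open ContinuousLinearMap

universe u v

variable {A : Type u} [NonUnitalCStarAlgebra A]
variable {H : Type v} [NormedAddCommGroup H] [InnerProductSpace ℂ H] [CompleteSpace H]

/-- A map between star algebras is *completely positive* if each of its matrix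
amplifications preserves positivity, where an element of a C⋆-algebra is positive
iff it is of the form `star y * y`. -/
def IsCP {R S : Type*} [NonUnitalSemiring R] [StarRing R]
    [NonUnitalSemiring S] [StarRing S] (φ : R → S) : Prop :=
  ∀ (m : ℕ) (x : Matrix (Fin m) (Fin m) R),
    (∃ y : Matrix (Fin m) (Fin m) R, x = star y * y) →
    ∃ z : Matrix (Fin m) (Fin m) S, x.map φ = star z * z

/-- The map `Mₙ(A) → Mₙ(L(H))` induced by an `n × n` matrix of maps,
`[a_ij] ↦ [ρ_ij (a_ij)]`. -/
def matApply {n : ℕ} (ρ : Fin n → Fin n → (A →L[ℂ] (H →L[ℂ] H)))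
    (x : Matrix (Fin n) (Fin n) A) : Matrix (Fin n) (Fin n) (H →L[ℂ] H) :=
  Matrix.of fun i j => ρ i j (x i j)

/-- An `n × n` matrix of continuous linear maps from `A` to `L(H)` is a
*completely `n`-positive linear map* if the induced map `Mₙ(A) → Mₙ(L(H))` is
completely positive. -/
def IsCnP {n : ℕ} (ρ : Fin n → Fin n → (A →L[ℂ] (H →L[ℂ] H))) : Prop :=
  IsCP (matApply ρ)

/-- `(Φ, K, V 0, …, V (n-1))` is a Stinespring representation of the completely
`n`-positive map `ρ = [ρ_ij]` : `Φ` is a (continuous) `*`-homomorphism,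
`ρ_ij (a) = (V i)* (Φ a) (V j)`, and the vectors `Φ a (V i ξ)` span a dense
subspace of `K`. -/
def IsStinespringRep {n : ℕ} (ρ : Fin n → Fin n → (A →L[ℂ] (H →L[ℂ] H)))
    {K : Type*} [NormedAddCommGroup K] [InnerProductSpace ℂ K] [CompleteSpace K]
    (Φ : A →⋆ₙₐ[ℂ] (K →L[ℂ] K)) (V : Fin n → (H →L[ℂ] K)) : Prop :=
  Continuous (⇑Φ) ∧
  (∀ (i j : Fin n) (a : A), ρ i j a = (adjoint (V i)).comp ((Φ a).comp (V j))) ∧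
  Dense ((Submodule.span ℂ
    {x : K | ∃ (a : A) (ξ : H) (i : Fin n), x = Φ a (V i ξ)} : Submodule ℂ K) : Set K)

/-- A completely `n`-positive map `ρ` is *pure* if every completely `n`-positive
`θ` with `θ ≤ ρ` is of the form `θ = α • ρ` for some `α ∈ [0,1]`. -/
def IsPureCnP {n : ℕ} (ρ : Fin n → Fin n → (A →L[ℂ] (H →L[ℂ] H))) : Prop :=
  ∀ θ : Fin n → Fin n → (A →L[ℂ] (H →L[ℂ] H)), IsCnP θ →
    IsCnP (fun i j => ρ i j - θ i j) →
    ∃ α : ℝ, 0 ≤ α ∧ α ≤ 1 ∧ ∀ i j, θ i j = (α : ℂ) • ρ i j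

/-! ### Positivity of operator matrices -/

section OperatorMatrices
open scoped InnerProductSpace

lemma proj_adjoint_proj {ι : Type*} [Fintype ι] [DecidableEq ι] (s t : ι) :
    (PiLp.proj 2 (𝕜 := ℂ) (fun _ : ι => H) s) ∘L
      adjoint (PiLp.proj 2 (𝕜 := ℂ) (fun _ : ι => H) t) = if s = t then 1 else 0 := by
  have key : ∀ x : H, adjoint (PiLp.proj 2 (𝕜 := ℂ) (fun _ : ι => H) t) x
      = PiLp.single 2 t x := by
    intro x
    refine ext_inner_right ℂ fun y => ?_
    rw [adjoint_inner_left, PiLp.inner_apply, Finset.sum_eq_single t]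
    · simp
    · intro b _ hb
      simp [hb]
    · simp
  ext x
  rw [comp_apply, key]
  by_cases h : s = t
  · subst h; simp
  · simp [h]

lemma sum_adjoint_proj_proj {ι : Type*} [Fintype ι] :
    ∑ s : ι, adjoint (PiLp.proj 2 (𝕜 := ℂ) (fun _ : ι => H) s) ∘L
      (PiLp.proj 2 (𝕜 := ℂ) (fun _ : ι => H) s) = 1 := by
  ext1 x
  refine ext_inner_right ℂ fun y => ?_
  rw [sum_apply, sum_inner, show (1 : PiLp 2 (fun _ : ι => H) →L[ℂ] _) x = x from rfl,
    PiLp.inner_apply]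
  refine Finset.sum_congr rfl fun i _ => ?_
  rw [comp_apply, adjoint_inner_left]
  rfl

lemma exists_star_mul_self {X : H →L[ℂ] H} (hX : X.IsPositive) :
    ∃ S : H →L[ℂ] H, X = star S * S :=
  CStarAlgebra.nonneg_iff_eq_star_mul_self.1 ((nonneg_iff_isPositive X).2 hX)

/-- The operator matrix with `(s, t)` entry `∑ r, (w r s)* T (w r t)` has the form `z* z` with `z`
a square matrix over `L(H)`: it is the matrix of the positive operator `∑ r, (W r)* T (W r)` on
the Hilbert sum of copies of `H`, where `W r` is the row `(w r s)_s`, and `z` is the matrix of a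
square root of that operator. -/
lemma exists_sqrt_matrix {K : Type*} [NormedAddCommGroup K] [InnerProductSpace ℂ K]
    [CompleteSpace K] {ι R : Type*} [Fintype ι] [Fintype R]
    (w : R → ι → (H →L[ℂ] K)) (T : K →L[ℂ] K) (hT : T.IsPositive) :
    ∃ z : ι → ι → (H →L[ℂ] H), ∀ s t,
      ∑ r, adjoint (w r s) ∘L (T ∘L w r t) = ∑ r, star (z r s) * z r t := by
  classical
  let P : ι → (PiLp 2 (fun _ : ι => H) →L[ℂ] H) :=
    fun s => PiLp.proj 2 (𝕜 := ℂ) (fun _ : ι => H) s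
  have hP : ∀ s t, P s ∘L adjoint (P t) = if s = t then 1 else 0 := proj_adjoint_proj
  have hP1 : ∑ s, adjoint (P s) ∘L P s = 1 := sum_adjoint_proj_proj
  let W : R → (PiLp 2 (fun _ : ι => H) →L[ℂ] K) := fun r => ∑ s, w r s ∘L P s
  have hW : ∀ r s, W r ∘L adjoint (P s) = w r s := by
    intro r s
    simp only [W, finsetSum_comp, comp_assoc, hP]
    rw [Finset.sum_eq_single s] <;> simp +contextual
    rfl
  let X : PiLp 2 (fun _ : ι => H) →L[ℂ] PiLp 2 (fun _ : ι => H) :=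
    ∑ r, adjoint (W r) ∘L (T ∘L W r)
  have hX : 0 ≤ X := by
    refine Finset.sum_nonneg fun r _ => ?_
    rw [nonneg_iff_isPositive]
    exact hT.adjoint_conj (W r)
  obtain ⟨S, hS⟩ := exists_star_mul_self ((nonneg_iff_isPositive X).1 hX)
  refine ⟨fun r s => P r ∘L (S ∘L adjoint (P s)), fun s t => ?_⟩
  have h1 : P s ∘L (X ∘L adjoint (P t)) = ∑ r, adjoint (w r s) ∘L (T ∘L w r t) := by
    simp only [X, finsetSum_comp, comp_finsetSum]
    refine Finset.sum_congr rfl fun r _ => ?_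
    rw [← hW r s, ← hW r t, adjoint_comp, adjoint_adjoint]
    rfl
  have h2 : P s ∘L (X ∘L adjoint (P t)) =
      P s ∘L (star S ∘L ((∑ r, adjoint (P r) ∘L P r) ∘L (S ∘L adjoint (P t)))) := by
    rw [hP1, hS]; rfl
  rw [← h1, h2]
  simp only [finsetSum_comp, comp_finsetSum]
  refine Finset.sum_congr rfl fun r _ => ?_
  rw [star_eq_adjoint, star_eq_adjoint, adjoint_comp, adjoint_comp, adjoint_adjoint]
  rfl

/-- A positive operator `T` in the commutant of `Φ` gives a completely `n`-positive map
`a ↦ (V i)* T (Φ a) (V j)`. -/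
lemma isCnP_of_commute {K : Type*} [NormedAddCommGroup K] [InnerProductSpace ℂ K]
    [CompleteSpace K] {n : ℕ} (θ : Fin n → Fin n → (A →L[ℂ] (H →L[ℂ] H)))
    (Φ : A →⋆ₙₐ[ℂ] (K →L[ℂ] K)) (V : Fin n → (H →L[ℂ] K)) (T : K →L[ℂ] K)
    (hT : T.IsPositive) (hc : ∀ a, T ∘L Φ a = Φ a ∘L T)
    (hθ : ∀ i j a, θ i j a = adjoint (V i) ∘L (T ∘L (Φ a ∘L V j))) : IsCnP θ := by
  rintro m _ ⟨y, rfl⟩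
  obtain ⟨z, hz⟩ := exists_sqrt_matrix
    (fun (r s : Fin m × Fin n) => Φ (y r.1 s.1 r.2 s.2) ∘L V s.2) T hT
  refine ⟨Matrix.of fun k l => Matrix.of fun i j => z (k, i) (l, j), ?_⟩
  ext1 k l
  ext1 i j
  have h := hz (k, i) (l, j)
  simp only [Matrix.map_apply, matApply, Matrix.of_apply, hθ, Matrix.mul_apply,
    Matrix.star_apply, Matrix.sum_apply]
  rw [Fintype.sum_prod_type, Fintype.sum_prod_type] at h
  rw [← h]
  simp only [map_sum, finsetSum_comp, comp_finsetSum]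
  refine Finset.sum_congr rfl fun p _ => Finset.sum_congr rfl fun q _ => ?_
  rw [map_mul, map_star, adjoint_comp, star_eq_adjoint]
  have := hc (star (y p k q i))
  rw [map_star, star_eq_adjoint] at this
  ext x
  have := congr($this (Φ (y p l q j) (V j x)))
  exact congr(adjoint (V i) $this)

/-- The matrices `[θ_{i k, i l} ((a k)* (a l))]` are Gram matrices of operators. -/
lemma IsCnP.exists_factor {n : ℕ} {θ : Fin n → Fin n → (A →L[ℂ] (H →L[ℂ] H))}
    (hθ : IsCnP θ) {ι : Type*} [Fintype ι] (i : ι → Fin n) (a : ι → A) :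
    ∃ (R : Type) (_ : Fintype R) (w : R → ι → (H →L[ℂ] H)), ∀ k l,
      θ (i k) (i l) (star (a k) * a l) = ∑ r, adjoint (w r k) ∘L w r l := by
  classical
  rcases isEmpty_or_nonempty ι with hι | ⟨⟨k₀⟩⟩
  · exact ⟨Empty, inferInstance, fun _ => isEmptyElim, fun k => isEmptyElim k⟩
  let e := Fintype.equivFin ι
  -- Only one row of the `y` below is nonzero: row `(k₀, i k₀)`, whose entry in column `(l, i l)`
  -- is `a l`. Hence `star y * y` has the entry `(a k)* (a l)` at position `((k, i k), (l, i l))`.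
  obtain ⟨z, hz⟩ := hθ (Fintype.card ι) _
    ⟨Matrix.of fun p l => Matrix.of fun q j =>
      if p = e k₀ ∧ q = i k₀ ∧ j = i (e.symm l) then a (e.symm l) else 0, rfl⟩
  refine ⟨Fin (Fintype.card ι) × Fin n, inferInstance,
    fun r k => z r.1 (e k) r.2 (i k), fun k l => ?_⟩
  have h := congr($hz (e k) (e l) (i k) (i l))
  simp only [Matrix.map_apply, matApply, Matrix.of_apply, Matrix.mul_apply,
    Matrix.star_apply, Matrix.sum_apply] at h
  rw [Finset.sum_eq_single (e k₀) (by simp +contextual) (by simp),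
    Finset.sum_eq_single (i k₀) (by simp +contextual) (by simp)] at h
  rw [Fintype.sum_prod_type]
  simpa [star_eq_adjoint, mul_def] using h

end OperatorMatrices

/-! ### The Radon-Nikodym operator of a dominated map -/

section Dilation
open scoped InnerProductSpace ComplexConjugate ComplexOrder

/-- A positive semidefinite form `c` on `D` dominated by the pull-back of the inner product of `K`
along a map `π` with dense range is represented by a positive contraction of `K`. The map `π d ↦ d`
extends to a contraction `J` from `K` to the Hausdorff completion of `(D, c)`, and `T = J* J`. -/
lemma exists_dominated_operator {K D : Type*} [NormedAddCommGroup K] [InnerProductSpace ℂ K]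
    [CompleteSpace K] [AddCommGroup D] [Module ℂ D] (c : PreInnerProductSpace.Core ℂ D)
    (π : D →ₗ[ℂ] K) (hπ : DenseRange π) (hle : ∀ d, (c.inner d d).re ≤ ‖π d‖ ^ 2) :
    ∃ T : K →L[ℂ] K, (∀ d e, ⟪T (π d), π e⟫_ℂ = c.inner d e) ∧
      ∀ x, ∃ r : ℝ, 0 ≤ r ∧ r ≤ ‖x‖ ^ 2 ∧ ⟪T x, x⟫_ℂ = r := by
  let _ : SeminormedAddCommGroup D := InnerProductSpace.Core.toSeminormedAddCommGroup (c := c)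
  let _ : InnerProductSpace ℂ D := InnerProductSpace.ofCore c
  let ι : D →ₗ[ℂ] UniformSpace.Completion D :=
    (UniformSpace.Completion.toComplₗᵢ (𝕜 := ℂ) (E := D)).toLinearMap
  have hι : ∀ d e, ⟪ι d, ι e⟫_ℂ = c.inner d e := fun d e =>
    UniformSpace.Completion.inner_coe d e
  have hn : ∀ d, ‖ι d‖ ≤ 1 * ‖π d‖ := by
    intro d
    rw [one_mul]
    refine le_of_sq_le_sq ?_ (norm_nonneg _)
    have := hle d
    rw [← hι, ← RCLike.re_eq_complex_re, inner_self_eq_norm_sq] at this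
    exact this
  let J := ι.extendOfNorm π
  have hJ : ∀ d, J (π d) = ι d := ι.extendOfNorm_eq hπ ⟨1, hn⟩
  have hJn : ∀ x, ‖J x‖ ≤ ‖x‖ := fun x => by
    simpa using ι.norm_extendOfNorm_apply_le hπ 1 hn x
  refine ⟨adjoint J ∘L J, fun d e => ?_, fun x => ⟨‖J x‖ ^ 2, by positivity, ?_, ?_⟩⟩
  · rw [comp_apply, adjoint_inner_left, hJ, hJ, hι]
  · have := hJn x
    gcongr
  · rw [comp_apply, adjoint_inner_left, inner_self_eq_norm_sq_to_K]
    simp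

/-- The sesquilinear form on finite formal combinations of triples `(i, a, ξ)` with
`⟪(i, a, ξ), (j, b, η)⟫ = ⟪ξ, θ_ij (a* b) η⟫`, conjugate linear in the first variable. The triple
`(i, a, ξ)` stands for the vector `Φ a (V i ξ)` of a Stinespring representation of `θ`. -/
def cnpForm {n : ℕ} (θ : Fin n → Fin n → (A →L[ℂ] (H →L[ℂ] H)))
    (d e : (Fin n × A × H) →₀ ℂ) : ℂ :=
  d.sum fun s x => e.sum fun t y =>
    conj x * (y * ⟪s.2.2, θ s.1 t.1 (star s.2.1 * t.2.1) t.2.2⟫_ℂ)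

lemma IsCnP.re_cnpForm_nonneg {n : ℕ} {θ : Fin n → Fin n → (A →L[ℂ] (H →L[ℂ] H))}
    (hθ : IsCnP θ) (d : (Fin n × A × H) →₀ ℂ) : 0 ≤ (cnpForm θ d d).re := by
  obtain ⟨R, _, w, hw⟩ := hθ.exists_factor (fun s : d.support => s.1.1) (fun s => s.1.2.1)
  have h : cnpForm θ d d = ∑ r, ⟪∑ s : d.support, d s • w r s s.1.2.2,
      ∑ s : d.support, d s • w r s s.1.2.2⟫_ℂ := by
    simp_rw [sum_inner, inner_sum, inner_smul_left, inner_smul_right]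
    simp only [cnpForm, Finsupp.sum]
    symm
    rw [Finset.sum_comm, ← Finset.sum_coe_sort d.support]
    refine Finset.sum_congr rfl fun s _ => ?_
    rw [Finset.sum_comm, ← Finset.sum_coe_sort d.support]
    refine Finset.sum_congr rfl fun t _ => ?_
    rw [hw s t, sum_apply, inner_sum, Finset.mul_sum, Finset.mul_sum]
    refine Finset.sum_congr rfl fun r _ => ?_
    rw [comp_apply, adjoint_inner_right]
  rw [h, Complex.re_sum]
  exact Finset.sum_nonneg fun r _ => inner_self_nonneg (𝕜 := ℂ)

lemma IsCnP.kernel_symm {n : ℕ} {θ : Fin n → Fin n → (A →L[ℂ] (H →L[ℂ] H))}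
    (hθ : IsCnP θ) (i j : Fin n) (a b : A) (ξ η : H) :
    conj ⟪η, θ j i (star b * a) ξ⟫_ℂ = ⟪ξ, θ i j (star a * b) η⟫_ℂ := by
  obtain ⟨R, _, w, hw⟩ := hθ.exists_factor ![i, j] ![a, b]
  have h1 := hw 0 1
  have h2 := hw 1 0
  simp only [Matrix.cons_val_zero, Matrix.cons_val_one] at h1 h2
  rw [h1, h2, sum_apply, sum_apply, inner_sum, inner_sum, map_sum]
  refine Finset.sum_congr rfl fun r _ => ?_
  rw [comp_apply, comp_apply, adjoint_inner_right, adjoint_inner_right, inner_conj_symm]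

/-- The semi-inner product `cnpForm θ` attached to a completely `n`-positive map `θ`. -/
@[reducible]
def IsCnP.core {n : ℕ} {θ : Fin n → Fin n → (A →L[ℂ] (H →L[ℂ] H))} (hθ : IsCnP θ) :
    PreInnerProductSpace.Core ℂ ((Fin n × A × H) →₀ ℂ) where
  inner := cnpForm θ
  conj_inner_symm d e := by
    simp only [cnpForm, Finsupp.sum, map_sum, map_mul, RCLike.conj_conj]
    rw [Finset.sum_comm]
    refine Finset.sum_congr rfl fun s _ => Finset.sum_congr rfl fun t _ => ?_
    rw [hθ.kernel_symm]
    ring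
  re_inner_nonneg := hθ.re_cnpForm_nonneg
  add_left d e f := by
    refine Finsupp.sum_add_index' (by simp) fun s x y => ?_
    simp only [map_add, add_mul, Finsupp.sum_add]
  smul_left d e c := by
    simp only [cnpForm]
    rw [Finsupp.sum_smul_index' (by simp), Finsupp.mul_sum]
    refine Finsupp.sum_congr fun s _ => ?_
    rw [Finsupp.mul_sum]
    refine Finsupp.sum_congr fun t _ => ?_
    simp only [smul_eq_mul, map_mul]
    ring

section Rep
variable {K : Type*} [NormedAddCommGroup K] [InnerProductSpace ℂ K] [CompleteSpace K]
  {n : ℕ} {ρ : Fin n → Fin n → (A →L[ℂ] (H →L[ℂ] H))}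
  {Φ : A →⋆ₙₐ[ℂ] (K →L[ℂ] K)} {V : Fin n → (H →L[ℂ] K)}

lemma IsStinespringRep.inner_gen (h : IsStinespringRep ρ Φ V) (i j : Fin n) (a b : A)
    (ξ η : H) : ⟪Φ a (V i ξ), Φ b (V j η)⟫_ℂ = ⟪ξ, ρ i j (star a * b) η⟫_ℂ := by
  rw [h.2.1, comp_apply, comp_apply, adjoint_inner_right, map_mul, map_star, star_eq_adjoint,
    mul_def, comp_apply, adjoint_inner_right]

/-- Operators are determined by their matrix coefficients at the vectors `Φ a (V i ξ)`, as these
span a dense subspace. -/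
lemma IsStinespringRep.ext_gen (h : IsStinespringRep ρ Φ V) {S T : K →L[ℂ] K}
    (hST : ∀ i j a b ξ η, ⟪S (Φ a (V i ξ)), Φ b (V j η)⟫_ℂ = ⟪T (Φ a (V i ξ)), Φ b (V j η)⟫_ℂ) :
    S = T := by
  refine ContinuousLinearMap.ext_on h.2.2 ?_
  rintro _ ⟨a, ξ, i, rfl⟩
  have : innerSL ℂ (S (Φ a (V i ξ))) = innerSL ℂ (T (Φ a (V i ξ))) := by
    refine ContinuousLinearMap.ext_on h.2.2 ?_
    rintro _ ⟨b, η, j, rfl⟩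
    exact hST i j a b ξ η
  exact ext_inner_right ℂ fun y => congr($this y)

/-- The linear map sending the formal triple `(i, a, ξ)` to `Φ a (V i ξ)`. -/
def genMap (Φ : A →⋆ₙₐ[ℂ] (K →L[ℂ] K)) (V : Fin n → (H →L[ℂ] K)) :
    ((Fin n × A × H) →₀ ℂ) →ₗ[ℂ] K :=
  Finsupp.linearCombination ℂ fun s => Φ s.2.1 (V s.1 s.2.2)

lemma IsStinespringRep.denseRange (h : IsStinespringRep ρ Φ V) : DenseRange (genMap Φ V) := by
  have := h.2.2
  rw [DenseRange, ← LinearMap.coe_range, genMap, Finsupp.range_linearCombination]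
  convert this using 4
  ext x
  constructor
  · rintro ⟨⟨i, a, ξ⟩, rfl⟩
    exact ⟨a, ξ, i, rfl⟩
  · rintro ⟨a, ξ, i, rfl⟩
    exact ⟨⟨i, a, ξ⟩, rfl⟩

lemma IsStinespringRep.cnpForm_eq (h : IsStinespringRep ρ Φ V) (d e : (Fin n × A × H) →₀ ℂ) :
    cnpForm ρ d e = ⟪genMap Φ V d, genMap Φ V e⟫_ℂ := by
  simp only [cnpForm, genMap, Finsupp.linearCombination_apply, Finsupp.sum]
  simp_rw [sum_inner, inner_sum, inner_smul_left, inner_smul_right, h.inner_gen]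

lemma cnpForm_sub (ρ θ : Fin n → Fin n → (A →L[ℂ] (H →L[ℂ] H))) (d e : (Fin n × A × H) →₀ ℂ) :
    cnpForm (fun i j => ρ i j - θ i j) d e = cnpForm ρ d e - cnpForm θ d e := by
  simp only [cnpForm, Finsupp.sum, sub_apply, inner_sub_right, mul_sub, Finset.sum_sub_distrib]

/-- A completely `n`-positive `θ ≤ ρ` has a Radon-Nikodym operator `T` with `0 ≤ T ≤ 1` in the
commutant of `Φ`. It commutes with `Φ c` because moving `c` from the left slot to the
right slot of `⟪ξ, θ_ij (a* b) η⟫` replaces `(c a)* b` by `a* (c* b)`. -/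
lemma IsStinespringRep.exists_radonNikodym (h : IsStinespringRep ρ Φ V)
    {θ : Fin n → Fin n → (A →L[ℂ] (H →L[ℂ] H))} (hθ : IsCnP θ)
    (hle : IsCnP fun i j => ρ i j - θ i j) :
    ∃ T : K →L[ℂ] K, (∀ a, T ∘L Φ a = Φ a ∘L T) ∧
      (∀ i j a b ξ η, ⟪T (Φ a (V i ξ)), Φ b (V j η)⟫_ℂ = ⟪ξ, θ i j (star a * b) η⟫_ℂ) ∧
      ∀ x, ∃ r : ℝ, 0 ≤ r ∧ r ≤ ‖x‖ ^ 2 ∧ ⟪T x, x⟫_ℂ = r := by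
  obtain ⟨T, hT, hT'⟩ := exists_dominated_operator hθ.core (genMap Φ V) h.denseRange (by
    intro d
    have h1 := hle.re_cnpForm_nonneg d
    rw [cnpForm_sub, Complex.sub_re, h.cnpForm_eq, ← RCLike.re_eq_complex_re,
      inner_self_eq_norm_sq] at h1
    exact sub_nonneg.1 h1)
  have hgen : ∀ i j a b ξ η,
      ⟪T (Φ a (V i ξ)), Φ b (V j η)⟫_ℂ = ⟪ξ, θ i j (star a * b) η⟫_ℂ := by
    intro i j a b ξ η
    have := hT (Finsupp.single (i, a, ξ) 1) (Finsupp.single (j, b, η) 1)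
    change _ = cnpForm θ _ _ at this
    simpa [genMap, cnpForm] using this
  refine ⟨T, fun c => h.ext_gen fun i j a b ξ η => ?_, hgen, hT'⟩
  have hmul : ∀ (x y : A) (v : K), Φ x (Φ y v) = Φ (x * y) v := fun x y v => by
    rw [map_mul]; rfl
  rw [comp_apply, comp_apply, hmul, hgen, ← adjoint_inner_right,
    ← star_eq_adjoint, ← map_star, hmul, hgen, star_mul, mul_assoc]

/-- In a possibly non-unital C⋆-algebra the elements `b* b` span, so products `a* b` suffice to
separate linear maps. -/
lemma clm_ext_star_mul {E : Type*} [AddCommMonoid E] [Module ℂ E] [TopologicalSpace E]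
    {f g : A →L[ℂ] E} (hfg : ∀ a b, f (star a * b) = g (star a * b)) : f = g := by
  let _ := CStarAlgebra.spectralOrder A
  have := CStarAlgebra.spectralOrderedRing A
  refine ContinuousLinearMap.coe_injective (LinearMap.ext_on (CStarAlgebra.span_nonneg (A := A)) ?_)
  intro a ha
  obtain ⟨b, rfl⟩ := CStarAlgebra.nonneg_iff_eq_star_mul_self.1 (show 0 ≤ a from ha)
  exact hfg b b

/-! ### Pure maps and the commutant -/

lemma isPure_of_irreducible (h : IsStinespringRep ρ Φ V)
    (hirr : ∀ T : K →L[ℂ] K, (∀ a : A, T ∘L Φ a = Φ a ∘L T) →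
      ∃ c : ℂ, T = c • (1 : K →L[ℂ] K)) : IsPureCnP ρ := by
  intro θ hθ hle
  obtain ⟨T, hcomm, hgen, hpos⟩ := h.exists_radonNikodym hθ hle
  obtain ⟨α, hα0, hα1, rfl⟩ : ∃ α : ℝ, 0 ≤ α ∧ α ≤ 1 ∧ T = (α : ℂ) • (1 : K →L[ℂ] K) := by
    obtain ⟨c, rfl⟩ := hirr T hcomm
    -- on the zero space the scalar `c` is not determined by `T`, and `0` serves instead
    rcases subsingleton_or_nontrivial K with hK | hK
    · exact ⟨0, le_rfl, zero_le_one, by ext x; exact Subsingleton.elim _ _⟩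
    -- the value of the quadratic form at a unit vector shows that `c` is real and in `[0, 1]`
    obtain ⟨x, hx⟩ := exists_norm_eq K zero_le_one
    obtain ⟨r, hr0, hr1, hr⟩ := hpos x
    rw [smul_apply, show (1 : K →L[ℂ] K) x = x from rfl, inner_smul_left,
      inner_self_eq_norm_sq_to_K, hx] at hr
    rw [hx] at hr1
    refine ⟨r, hr0, by simpa using hr1, ?_⟩
    have : conj c = (r : ℂ) := by simpa using hr
    rw [← this, ← Complex.conj_conj c, this]
    simp
  refine ⟨α, hα0, hα1, fun i j => clm_ext_star_mul fun a b => ?_⟩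
  ext η
  refine ext_inner_left ℂ fun ξ => ?_
  rw [← hgen, smul_apply, smul_apply, show (1 : K →L[ℂ] K) (Φ a (V i ξ)) = _ from rfl, smul_apply,
    inner_smul_left, inner_smul_right, Complex.conj_ofReal, ← h.inner_gen]
  rfl

/-- The matrix of maps `a ↦ (V i)* T (Φ a) (V j)` attached to an operator `T`. -/
def compressed (hΦ : Continuous Φ) (V : Fin n → (H →L[ℂ] K)) (T : K →L[ℂ] K) (i j : Fin n) :
    A →L[ℂ] (H →L[ℂ] H) where
  toFun a := adjoint (V i) ∘L (T ∘L (Φ a ∘L V j))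
  map_add' a b := by simp
  map_smul' c a := by simp
  cont := by fun_prop

/-- For `0 ≤ T ≤ 1` in the commutant, the compressed map is completely `n`-positive and below `ρ`,
so purity forces it, and hence `T`, to be a scalar multiple. -/
lemma scalar_of_pure_of_bounds (h : IsStinespringRep ρ Φ V) (hpure : IsPureCnP ρ)
    {T : K →L[ℂ] K} (hcomm : ∀ a : A, T ∘L Φ a = Φ a ∘L T) (h0 : T.IsPositive)
    (h1 : (1 - T).IsPositive) : ∃ c : ℂ, T = c • (1 : K →L[ℂ] K) := by
  obtain ⟨α, -, -, hα⟩ := hpure (compressed h.1 V T)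
    (isCnP_of_commute _ Φ V T h0 hcomm fun _ _ _ => rfl)
    (isCnP_of_commute _ Φ V (1 - T) h1
      (fun a => by
        rw [sub_comp, comp_sub, hcomm]; rfl)
      (fun i j a => by
        rw [sub_apply, h.2.1, sub_comp, comp_sub]; rfl))
  refine ⟨α, h.ext_gen fun i j a b ξ η => ?_⟩
  have := congr(⟪ξ, $(hα i j) (star a * b) η⟫_ℂ)
  rw [smul_apply, smul_apply, inner_smul_right, ← h.inner_gen] at this
  rw [smul_apply, show (1 : K →L[ℂ] K) (Φ a (V i ξ)) = _ from rfl, inner_smul_left,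
    Complex.conj_ofReal]
  refine Eq.trans ?_ this
  change _ = ⟪ξ, adjoint (V i) (T (Φ (star a * b) (V j η)))⟫_ℂ
  have hc := congr($(hcomm (star a)) (Φ b (V j η)))
  rw [comp_apply, comp_apply] at hc
  rw [adjoint_inner_right, map_mul, mul_def, comp_apply, hc, map_star, star_eq_adjoint,
    adjoint_inner_right, ← adjoint_inner_left T, h0.isSelfAdjoint.adjoint_eq]

lemma isPositive_add_smul_one {T : K →L[ℂ] K} (hT : IsSelfAdjoint T) {r : ℝ} (hr : ‖T‖ ≤ r) :
    (T + (r : ℂ) • (1 : K →L[ℂ] K)).IsPositive := by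
  refine isPositive_def'.2 ⟨hT.add ?_, fun x => ?_⟩
  · rw [isSelfAdjoint_iff, star_smul, star_one]
    simp
  · have h1 : |RCLike.re ⟪T x, x⟫_ℂ| ≤ r * ‖x‖ ^ 2 := by
      calc |RCLike.re ⟪T x, x⟫_ℂ| ≤ ‖⟪T x, x⟫_ℂ‖ := RCLike.abs_re_le_norm _
        _ ≤ ‖T x‖ * ‖x‖ := norm_inner_le_norm _ _
        _ ≤ (r * ‖x‖) * ‖x‖ := by
            have := T.le_of_opNorm_le hr x
            gcongr
        _ = r * ‖x‖ ^ 2 := by ring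
    have h2 : RCLike.re ⟪(r : ℂ) • x, x⟫_ℂ = r * ‖x‖ ^ 2 := by
      rw [inner_smul_left, inner_self_eq_norm_sq_to_K, Complex.conj_ofReal]
      simp [← Complex.ofReal_pow, ← Complex.ofReal_mul]
    rw [reApplyInnerSelf_apply, add_apply, smul_apply, show (1 : K →L[ℂ] K) x = x from rfl,
      inner_add_left, map_add, h2]
    linarith [(abs_le.1 h1).1]

lemma scalar_of_pure_of_isSelfAdjoint (h : IsStinespringRep ρ Φ V) (hpure : IsPureCnP ρ)
    {T : K →L[ℂ] K} (hcomm : ∀ a : A, T ∘L Φ a = Φ a ∘L T) (hT : IsSelfAdjoint T) :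
    ∃ c : ℂ, T = c • (1 : K →L[ℂ] K) := by
  -- `(T + r) / (2 r)` lies between `0` and `1`
  let r : ℝ := ‖T‖ + 1
  have hr0 : 0 < r := by positivity
  have hrC : (r : ℂ) ≠ 0 := by exact_mod_cast hr0.ne'
  have hinv : (0 : ℂ) ≤ ((2 * r)⁻¹ : ℝ) := by exact_mod_cast (by positivity : 0 ≤ (2 * r)⁻¹)
  have hT₁ : ‖T‖ ≤ r := by simp [r]
  obtain ⟨c, hc⟩ := scalar_of_pure_of_bounds h hpure
    (T := (((2 * r)⁻¹ : ℝ) : ℂ) • (T + (r : ℂ) • (1 : K →L[ℂ] K)))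
    (fun a => by
      rw [smul_comp, comp_smul, add_comp, comp_add, smul_comp, comp_smul, hcomm]; rfl)
    ((isPositive_add_smul_one hT hT₁).smul_of_nonneg hinv)
    (by
      convert (isPositive_add_smul_one hT.neg (r := r) (by rwa [norm_neg])).smul_of_nonneg hinv
        using 1
      have : (1 : K →L[ℂ] K) = ((2 * r : ℂ)⁻¹ * (2 * r)) • 1 := by
        rw [inv_mul_cancel₀ (by simpa using hrC), one_smul]
      nth_rewrite 1 [this]
      push_cast
      module)
  refine ⟨2 * r * c - r, ?_⟩
  have h2 : (2 * r : ℂ) • ((((2 * r)⁻¹ : ℝ) : ℂ) • (T + (r : ℂ) • (1 : K →L[ℂ] K))) =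
      T + (r : ℂ) • (1 : K →L[ℂ] K) := by
    rw [smul_smul]
    push_cast
    rw [mul_inv_cancel₀ (by simpa using hrC), one_smul]
  rw [hc] at h2
  rw [sub_smul, eq_sub_iff_add_eq, ← h2, smul_smul]

lemma scalar_of_pure (h : IsStinespringRep ρ Φ V) (hpure : IsPureCnP ρ)
    {T : K →L[ℂ] K} (hcomm : ∀ a : A, T ∘L Φ a = Φ a ∘L T) :
    ∃ c : ℂ, T = c • (1 : K →L[ℂ] K) := by
  have hstar : ∀ a : A, star T ∘L Φ a = Φ a ∘L star T := by
    intro a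
    have h1 : star (T * Φ (star a)) = star (Φ (star a) * T) := congrArg star (hcomm (star a))
    rw [star_mul, star_mul, ← map_star, star_star] at h1
    exact h1.symm
  -- up to scalars, the real and imaginary parts of `T`
  obtain ⟨c, hc⟩ := scalar_of_pure_of_isSelfAdjoint h hpure (T := T + star T)
    (fun a => by rw [add_comp, comp_add, hcomm, hstar]) (IsSelfAdjoint.add_star_self T)
  obtain ⟨d, hd⟩ := scalar_of_pure_of_isSelfAdjoint h hpure (T := Complex.I • (T - star T))
    (fun a => by rw [smul_comp, comp_smul, sub_comp, comp_sub, hcomm, hstar])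
    (by
      rw [isSelfAdjoint_iff, star_smul, star_sub, star_star, ← starRingEnd_apply, Complex.conj_I,
        neg_smul, ← smul_neg, neg_sub])
  refine ⟨(c - Complex.I * d) / 2, ?_⟩
  have h1 : T = (1 / 2 : ℂ) • ((T + star T) - Complex.I • (Complex.I • (T - star T))) := by
    rw [smul_smul, Complex.I_mul_I]
    module
  rw [hc, hd] at h1
  rw [h1]
  module

end Rep
end Dilation

/-- A completely `n`-positive map `ρ` is pure if and only if its Stinespring
representation is irreducible (the commutant consists exactly of the scalar
multiples of the identity). -/
theorem statement12 {n : ℕ} (ρ : Fin n → Fin n → (A →L[ℂ] (H →L[ℂ] H)))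
    (hρ : IsCnP ρ)
    {K : Type*} [NormedAddCommGroup K] [InnerProductSpace ℂ K] [CompleteSpace K]
    (Φ : A →⋆ₙₐ[ℂ] (K →L[ℂ] K)) (V : Fin n → (H →L[ℂ] K))
    (h : IsStinespringRep ρ Φ V) :
    IsPureCnP ρ ↔
      ∀ T : K →L[ℂ] K, (∀ a : A, T.comp (Φ a) = (Φ a).comp T) ↔
        ∃ c : ℂ, T = c • (1 : K →L[ℂ] K) := by
  refine ⟨fun hp T => ⟨fun hT => scalar_of_pure h hp hT, ?_⟩,
    fun hirr => isPure_of_irreducible h fun T hT => (hirr T).1 hT⟩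
  rintro ⟨c, rfl⟩ a
  rw [smul_comp, comp_smul]
  rfl
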